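/- Let A > 0 and B be real numbers. Let γ : ℝ → ℝ be defined by γ(y) = exp(−1/(1−y²)) for |y| < 1 and γ(y) = 0 for |y| ≥ 1, and set c = −A/γ(0) < 0. Suppose α : ℝ → ℝ is a C^∞ function vanishing outside (−1,1), with ∫_{−1}^{1} α = 0, whose primitive β(x) = ∫_{−1}^{x} α(t) dt is strictly positive on (−1,1), and suppose there exist −1 < x₁ < x₂ < 1 with α > c on (−1,x₁) ∪ (x₂,1), α < c on (x₁,x₂), α(x₁) = α(x₂) = c, and α'(x₁) < 0 < α'(x₂). Then the function f̃(x,y) := A·x + B + β(x)·γ(y) is C^∞ on ℝ², its set of critical points is exactly {(x₁,0), (x₂,0)}, the Hessian of f̃ at (x₁,0) is negative definite (a non-degenerate local maximum), and the Hessian of f̃ at (x₂,0) has negative determinant (a non-degenerate saddle). -/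

import Mathlib

/-- The bump function `γ(y) = exp(−1/(1−y²))` for `|y| < 1`, and `γ(y) = 0` for `|y| ≥ 1`. -/
noncomputable def gammaBump (y : ℝ) : ℝ :=
  if |y| < 1 then Real.exp (-(1 / (1 - y ^ 2))) else 0

/-- The primitive `β(x) = ∫_{−1}^x α(t) dt`. -/
noncomputable def betaPrim (α : ℝ → ℝ) (x : ℝ) : ℝ :=
  ∫ t in (-1 : ℝ)..x, α t

/-- The second directional derivative (Hessian bilinear form) of `f : ℝ² → ℝ`
at the point `p`, evaluated on the directions `v`, `w`. -/
noncomputable def hessianForm (f : ℝ × ℝ → ℝ) (p v w : ℝ × ℝ) : ℝ :=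
  fderiv ℝ (fun q => fderiv ℝ f q v) p w

open scoped ContDiff

theorem gammaBump_eq_expNegInvGlue (y : ℝ) : gammaBump y = expNegInvGlue (1 - y ^ 2) := by
  unfold gammaBump expNegInvGlue
  by_cases h : |y| < 1
  · have := (sq_lt_one_iff_abs_lt_one y).2 h
    rw [if_pos h, if_neg (by linarith), one_div]
  · have : ¬ y ^ 2 < 1 := fun h' => h ((sq_lt_one_iff_abs_lt_one y).1 h')
    rw [if_neg h, if_pos (by linarith)]

theorem gammaBump_pos {y : ℝ} (hy : |y| < 1) : 0 < gammaBump y := by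
  rw [gammaBump, if_pos hy]
  exact Real.exp_pos _

theorem contDiff_gammaBump : ContDiff ℝ ∞ gammaBump := by
  rw [funext gammaBump_eq_expNegInvGlue]
  exact expNegInvGlue.contDiff.comp (by fun_prop)

/-- The derivative of `gammaBump`, with the convention `0⁻¹ = 0` at `y = ±1`. -/
noncomputable def gammaBumpDeriv (y : ℝ) : ℝ :=
  y * (-2 * ((1 - y ^ 2)⁻¹ ^ 2 * gammaBump y))

theorem hasDerivAt_one_sub_sq (y : ℝ) :
    HasDerivAt (fun y : ℝ => 1 - y ^ 2) (-(2 * y)) y := by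
  simpa using (hasDerivAt_pow 2 y).const_sub 1

theorem hasDerivAt_gammaBump (y : ℝ) : HasDerivAt gammaBump (gammaBumpDeriv y) y := by
  have h := (expNegInvGlue.hasDerivAt_polynomial_eval_inv_mul 1 (1 - y ^ 2)).comp y
    (hasDerivAt_one_sub_sq y)
  rw [funext gammaBump_eq_expNegInvGlue]
  convert! h using 1
  · ext z
    simp
  · simp only [gammaBumpDeriv, gammaBump_eq_expNegInvGlue]
    simp
    ring

theorem gammaBumpDeriv_eq_zero_iff {y : ℝ} (hy : |y| < 1) : gammaBumpDeriv y = 0 ↔ y = 0 := by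
  have h1 := (sq_lt_one_iff_abs_lt_one y).2 hy
  have h2 : 1 - y ^ 2 ≠ 0 := by linarith
  simp [gammaBumpDeriv, (gammaBump_pos hy).ne', h2]

theorem hasDerivAt_gammaBumpDeriv_zero :
    HasDerivAt gammaBumpDeriv (-2 * gammaBump 0) 0 := by
  have hd : DifferentiableAt ℝ (fun y : ℝ => -2 * ((1 - y ^ 2)⁻¹ ^ 2 * gammaBump y)) 0 := by
    have := contDiff_gammaBump.differentiable (by simp) 0
    have h0 : (1 - (0 : ℝ) ^ 2) ≠ 0 := by norm_num
    fun_prop (disch := assumption)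
  have h : HasDerivAt gammaBumpDeriv _ 0 := (hasDerivAt_id (0 : ℝ)).mul hd.hasDerivAt
  simpa using h

theorem hasDerivAt_betaPrim {α : ℝ → ℝ} (hα : Continuous α) (x : ℝ) :
    HasDerivAt (betaPrim α) (α x) x :=
  (hα.integral_hasStrictDerivAt (-1) x).hasDerivAt

theorem contDiff_betaPrim {α : ℝ → ℝ} (hα : ContDiff ℝ ∞ α) : ContDiff ℝ ∞ (betaPrim α) := by
  have h := hasDerivAt_betaPrim hα.continuous
  rw [contDiff_infty_iff_deriv]
  refine ⟨fun x => (h x).differentiableAt, ?_⟩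
  rwa [funext fun x => (h x).deriv]

section AffineAddMul

variable {A B : ℝ} {b a g g' : ℝ → ℝ}

/-- The Fréchet derivative of an affine function of `x` plus a product `b(x) g(y)`. -/
theorem fderiv_affine_add_mul (hb : ∀ x, HasDerivAt b (a x) x) (hg : ∀ y, HasDerivAt g (g' y) y)
    (p v : ℝ × ℝ) :
    fderiv ℝ (fun p : ℝ × ℝ => A * p.1 + B + b p.1 * g p.2) p v =
      (A + a p.1 * g p.2) * v.1 + b p.1 * g' p.2 * v.2 := by
  have h1 := (hb p.1).comp_hasFDerivAt p (hasFDerivAt_fst (𝕜 := ℝ))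
  have h2 := (hg p.2).comp_hasFDerivAt p (hasFDerivAt_snd (𝕜 := ℝ))
  have h := (((hasFDerivAt_fst (𝕜 := ℝ) (p := p)).const_mul A).add_const B).add (h1.mul h2)
  have h' : HasFDerivAt (fun p : ℝ × ℝ => A * p.1 + B + b p.1 * g p.2) _ p := h
  rw [h'.fderiv]
  simp
  ring

theorem hessianForm_affine_add_mul (hb : ∀ x, HasDerivAt b (a x) x)
    (hg : ∀ y, HasDerivAt g (g' y) y) {p : ℝ × ℝ} {a' g'' : ℝ}
    (ha : HasDerivAt a a' p.1) (hg' : HasDerivAt g' g'' p.2) (v w : ℝ × ℝ) :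
    hessianForm (fun p : ℝ × ℝ => A * p.1 + B + b p.1 * g p.2) p v w =
      a' * g p.2 * (v.1 * w.1) + a p.1 * g' p.2 * (v.1 * w.2 + v.2 * w.1) +
        b p.1 * g'' * (v.2 * w.2) := by
  unfold hessianForm
  simp only [fderiv_affine_add_mul hb hg]
  have h1 := (hb p.1).comp_hasFDerivAt p (hasFDerivAt_fst (𝕜 := ℝ))
  have h2 := (hg p.2).comp_hasFDerivAt p (hasFDerivAt_snd (𝕜 := ℝ))
  have h3 := ha.comp_hasFDerivAt p (hasFDerivAt_fst (𝕜 := ℝ))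
  have h4 := hg'.comp_hasFDerivAt p (hasFDerivAt_snd (𝕜 := ℝ))
  have h := (((h3.mul h2).const_add A).mul_const v.1).add ((h1.mul h4).mul_const v.2)
  have h' : HasFDerivAt (fun q : ℝ × ℝ =>
    (A + a q.1 * g q.2) * v.1 + b q.1 * g' q.2 * v.2) _ p := h
  rw [h'.fderiv]
  simp
  ring

end AffineAddMul

/-- Let `A > 0`, `B ∈ ℝ`, `c = −A/γ(0)`, and let `α` be a smooth function supported in
`(−1,1)` with vanishing integral, strictly positive primitive `β` on `(−1,1)`, crossing the
level `c` exactly twice transversally at `x₁ < x₂` (from above at `x₁`, from below at `x₂`).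
Then `f̃(x,y) = A·x + B + β(x)·γ(y)` is smooth, its critical points are exactly `(x₁,0)` and
`(x₂,0)`, the Hessian at `(x₁,0)` is negative definite, and the Hessian at `(x₂,0)` has
negative determinant. -/
theorem perturbed_function_max_saddle
    (A B : ℝ) (hA : 0 < A) (α : ℝ → ℝ) (x₁ x₂ : ℝ)
    (hsmooth : ContDiff ℝ (⊤ : ℕ∞) α)
    (hsupp : ∀ x : ℝ, x ∉ Set.Ioo (-1 : ℝ) 1 → α x = 0)
    (hint : (∫ t in (-1 : ℝ)..1, α t) = 0)
    (hbeta : ∀ x ∈ Set.Ioo (-1 : ℝ) 1, 0 < betaPrim α x)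
    (h1 : -1 < x₁) (h12 : x₁ < x₂) (h2 : x₂ < 1)
    (hgt1 : ∀ x, -1 < x → x < x₁ → -A / gammaBump 0 < α x)
    (heq1 : α x₁ = -A / gammaBump 0)
    (hlt : ∀ x, x₁ < x → x < x₂ → α x < -A / gammaBump 0)
    (heq2 : α x₂ = -A / gammaBump 0)
    (hgt2 : ∀ x, x₂ < x → x < 1 → -A / gammaBump 0 < α x)
    (hd1 : deriv α x₁ < 0) (hd2 : 0 < deriv α x₂) :
    ContDiff ℝ (⊤ : ℕ∞) (fun p : ℝ × ℝ => A * p.1 + B + betaPrim α p.1 * gammaBump p.2) ∧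
      {p : ℝ × ℝ |
          fderiv ℝ (fun p : ℝ × ℝ => A * p.1 + B + betaPrim α p.1 * gammaBump p.2) p = 0}
        = {(x₁, 0), (x₂, 0)} ∧
      (∀ v : ℝ × ℝ, v ≠ 0 →
        hessianForm (fun p : ℝ × ℝ => A * p.1 + B + betaPrim α p.1 * gammaBump p.2)
          (x₁, 0) v v < 0) ∧
      hessianForm (fun p : ℝ × ℝ => A * p.1 + B + betaPrim α p.1 * gammaBump p.2)
          (x₂, 0) (1, 0) (1, 0) *
        hessianForm (fun p : ℝ × ℝ => A * p.1 + B + betaPrim α p.1 * gammaBump p.2)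
          (x₂, 0) (0, 1) (0, 1) -
        (hessianForm (fun p : ℝ × ℝ => A * p.1 + B + betaPrim α p.1 * gammaBump p.2)
          (x₂, 0) (1, 0) (0, 1)) ^ 2 < 0 := by
  have hb := hasDerivAt_betaPrim hsmooth.continuous
  have hg := hasDerivAt_gammaBump
  have hg0 : 0 < gammaBump 0 := gammaBump_pos (by simp)
  have hgd0 : gammaBumpDeriv 0 = 0 := by simp [gammaBumpDeriv]
  have hα (x : ℝ) : HasDerivAt α (deriv α x) x :=
    (hsmooth.differentiable (by simp) x).hasDerivAt
  have hess (x : ℝ) (v w : ℝ × ℝ) :=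
    hessianForm_affine_add_mul (A := A) (B := B) (p := (x, 0)) hb hg (hα x)
      hasDerivAt_gammaBumpDeriv_zero v w
  have hb1 := hbeta x₁ ⟨h1, h12.trans h2⟩
  have hb2 := hbeta x₂ ⟨h1.trans h12, h2⟩
  refine ⟨?_, ?_, ?_, ?_⟩
  · have := contDiff_betaPrim hsmooth
    have := contDiff_gammaBump
    fun_prop
  · ext ⟨x, y⟩
    simp only [Set.mem_ofPred_eq, Set.mem_insert_iff, Set.mem_singleton_iff, Prod.mk.injEq]
    constructor
    · intro h
      have hx := fderiv_affine_add_mul (A := A) (B := B) hb hg (x, y) (1, 0)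
      have hy := fderiv_affine_add_mul (A := A) (B := B) hb hg (x, y) (0, 1)
      simp only [h, zero_apply, mul_one, mul_zero, add_zero, zero_add] at hx hy
      have hy1 : |y| < 1 := by
        by_contra hn
        rw [gammaBump, if_neg hn] at hx
        linarith
      have hx1 : x ∈ Set.Ioo (-1 : ℝ) 1 := by
        by_contra hn
        rw [hsupp x hn] at hx
        linarith
      obtain rfl : y = 0 :=
        (gammaBumpDeriv_eq_zero_iff hy1).1
          ((mul_eq_zero.1 hy.symm).resolve_left (hbeta x hx1).ne')
      have hxc : α x = -A / gammaBump 0 := by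
        rw [eq_div_iff hg0.ne']
        linarith
      rcases lt_trichotomy x x₁ with h | h | h
      · exact absurd hxc (hgt1 x hx1.1 h).ne'
      · exact Or.inl ⟨h, rfl⟩
      rcases lt_trichotomy x x₂ with h' | h' | h'
      · exact absurd hxc (hlt x h h').ne
      · exact Or.inr ⟨h', rfl⟩
      · exact absurd hxc (hgt2 x h' hx1.2).ne'
    · have crit {x : ℝ} (hx : α x = -A / gammaBump 0) :
          fderiv ℝ (fun p : ℝ × ℝ => A * p.1 + B + betaPrim α p.1 * gammaBump p.2) (x, 0) = 0 := by
        refine ContinuousLinearMap.ext fun v => ?_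
        rw [fderiv_affine_add_mul hb hg, hx, hgd0, div_mul_cancel₀ _ hg0.ne']
        simp
      rintro (⟨rfl, rfl⟩ | ⟨rfl, rfl⟩)
      · exact crit heq1
      · exact crit heq2
  · rintro ⟨u, v⟩ hv
    rw [hess]
    have hu' : deriv α x₁ * gammaBump 0 < 0 := mul_neg_of_neg_of_pos hd1 hg0
    have hv' : betaPrim α x₁ * (-2 * gammaBump 0) < 0 := mul_neg_of_pos_of_neg hb1 (by linarith)
    simp only [hgd0, mul_zero, zero_mul, add_zero]
    by_cases hu : u = 0
    · have hv0 : v ≠ 0 := fun h => hv (by simp [hu, h])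
      rw [hu, mul_zero, mul_zero, zero_add]
      exact mul_neg_of_neg_of_pos hv' (mul_self_pos.2 hv0)
    · exact add_neg_of_neg_of_nonpos (mul_neg_of_neg_of_pos hu' (mul_self_pos.2 hu))
        (mul_nonpos_of_nonpos_of_nonneg hv'.le (mul_self_nonneg v))
  · simp only [hess, hgd0, mul_zero, add_zero, mul_one, zero_add]
    have := mul_pos (mul_pos hd2 hg0) (mul_pos hb2 hg0)
    linarith
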